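/- Let d ≥ 1, let q_1, …, q_d be pairwise coprime positive integers, let V, Y : ℤ^d → ℝ be Γ-periodic, and let λ_0 ∈ ℂ. If the zero sets coincide, {z ∈ (ℂ∖{0})^d : P̃_V(z,λ_0) = 0} = {z ∈ (ℂ∖{0})^d : P̃_Y(z,λ_0) = 0}, then P̃_V(z,λ_0) = P̃_Y(z,λ_0) for all z ∈ (ℂ∖{0})^d. -/

import Mathlib

open scoped BigOperators
open Complex

noncomputable section

/-- The fundamental domain `W` for `Γ = q₁ℤ ⊕ ⋯ ⊕ q_dℤ`, as a type. -/
abbrev Cell (d : ℕ) (q : Fin d → ℕ) := (j : Fin d) → Fin (q j)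

/-- `V : ℤ^d → ℝ` is `Γ`-periodic for `Γ = q₁ℤ ⊕ ⋯ ⊕ q_dℤ`. -/
def IsPeriodicPotential (d : ℕ) (q : Fin d → ℕ) (V : (Fin d → ℤ) → ℝ) : Prop :=
  ∀ n γ : Fin d → ℤ, (∀ j, (q j : ℤ) ∣ γ j) → V (n + γ) = V n

/-- The discrete Fourier transform `V̂(l)`, defined for all `l ∈ ℤ^d`
(it is automatically `Γ`-periodic in `l`). -/
def dft (d : ℕ) (q : Fin d → ℕ) (V : (Fin d → ℤ) → ℝ) (l : Fin d → ℤ) : ℂ :=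
  (1 / ∏ j, (q j : ℂ)) *
    ∑ n : Cell d q, (V (fun j => ((n j : ℕ) : ℤ)) : ℂ) *
      Complex.exp (-(2 * Real.pi * Complex.I) * ∑ j, (l j : ℂ) * ((n j : ℕ) : ℂ) / (q j : ℂ))

/-- `ρ^j_m = e^{2πi m/q_j}`. -/
def rho (d : ℕ) (q : Fin d → ℕ) (j : Fin d) (m : ℤ) : ℂ :=
  Complex.exp (2 * Real.pi * Complex.I * (m : ℂ) / (q j : ℂ))

/-- The Floquet matrix `M_V(z)` (the matrix `A + B_V` of Lemma 2.7). -/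
def floquetMatrix (d : ℕ) (q : Fin d → ℕ) (V : (Fin d → ℤ) → ℝ) (z : Fin d → ℂ) :
    Matrix (Cell d q) (Cell d q) ℂ := fun n n' =>
  (if n = n' then ∑ j, (rho d q j (n j : ℕ) * z j + (rho d q j (n j : ℕ) * z j)⁻¹) else 0)
    + dft d q V (fun j => ((n j : ℕ) : ℤ) - ((n' j : ℕ) : ℤ))

/-- `P̃_V(z, λ) = det (M_V(z) − λ I)`. -/
def floquetDet (d : ℕ) (q : Fin d → ℕ) (V : (Fin d → ℤ) → ℝ) (z : Fin d → ℂ) (lam : ℂ) : ℂ :=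
  Matrix.det (floquetMatrix d q V z - lam • (1 : Matrix (Cell d q) (Cell d q) ℂ))

/-- `V` and `Y` are Fermi isospectral. -/
def FermiIsospectral (d : ℕ) (q : Fin d → ℕ) (V Y : (Fin d → ℤ) → ℝ) : Prop :=
  ∃ lam0 : ℂ,
    {z : Fin d → ℂ | (∀ j, z j ≠ 0) ∧ floquetDet d q V z lam0 = 0}
      = {z : Fin d → ℂ | (∀ j, z j ≠ 0) ∧ floquetDet d q Y z lam0 = 0}

/-- `V` and `Y` are Floquet isospectral. -/
def FloquetIsospectral (d : ℕ) (q : Fin d → ℕ) (V Y : (Fin d → ℤ) → ℝ) : Prop :=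
  ∀ z : Fin d → ℂ, (∀ j, z j ≠ 0) → ∀ lam : ℂ,
    floquetDet d q V z lam = floquetDet d q Y z lam

/-- The average `[V]` of `V` over one periodicity cell. -/
def potentialAvg (d : ℕ) (q : Fin d → ℕ) (V : (Fin d → ℤ) → ℝ) : ℝ :=
  (1 / ∏ j, (q j : ℝ)) * ∑ n : Cell d q, V (fun j => ((n j : ℕ) : ℤ))

/-- The embedding of the `j`-th block of coordinates into `Fin d`,
given block sizes `D : Fin r → ℕ` with `∑ j, D j = d`. -/
def blockEmbed {r d : ℕ} (D : Fin r → ℕ) (hsum : ∑ j, D j = d) (j : Fin r) (i : Fin (D j)) :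
    Fin d :=
  ⟨(∑ k ∈ Finset.univ.filter (fun k => k < j), D k) + i.1, by
    have hj : j ∉ Finset.univ.filter (fun k => k < j) := by simp
    have h2 : (∑ k ∈ Finset.univ.filter (fun k => k < j), D k) + D j ≤ ∑ k, D k := by
      calc (∑ k ∈ Finset.univ.filter (fun k => k < j), D k) + D j
          = ∑ k ∈ insert j (Finset.univ.filter (fun k => k < j)), D k := by
            rw [Finset.sum_insert hj, add_comm]
        _ ≤ ∑ k, D k := Finset.sum_le_sum_of_subset (Finset.subset_univ _)
    have h3 := i.2
    omega⟩

/-- `V` is `(D 0, …, D (r-1))` separable. -/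
def IsSeparablePotential {r : ℕ} (d : ℕ) (D : Fin r → ℕ) (hsum : ∑ j, D j = d)
    (V : (Fin d → ℤ) → ℝ) : Prop :=
  ∃ Vj : (j : Fin r) → (Fin (D j) → ℤ) → ℝ,
    ∀ n : Fin d → ℤ, V n = ∑ j, Vj j (fun i => n (blockEmbed D hsum j i))




open Polynomial in
/-- Polynomial version of the matrix pencil `diag(a x² + c) + x B`. -/
def pencil {ι : Type} [Fintype ι] [DecidableEq ι] (a c : ι → ℂ) (B : Matrix ι ι ℂ) : ℂ[X] :=
  Matrix.det (Matrix.of fun n m : ι =>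
    ((if n = m then C (a n) * X ^ 2 + C (c n) else 0) + C (B n m) * X : ℂ[X]))

open Polynomial in
lemma pencil_eval {ι : Type} [Fintype ι] [DecidableEq ι] (a c : ι → ℂ) (B : Matrix ι ι ℂ)
    (x : ℂ) : (pencil a c B).eval x =
      Matrix.det (Matrix.diagonal (fun n => a n * x ^ 2 + c n) + x • B) := by
  rw [pencil, ← Polynomial.coe_evalRingHom, RingHom.map_det]
  congr 1
  ext n m
  by_cases h : n = m
  · subst h; simp; ring
  · simp [h]; ring

open Polynomial in
lemma pencil_eval_ne {ι : Type} [Fintype ι] [DecidableEq ι] (a c : ι → ℂ) (B : Matrix ι ι ℂ)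
    (x : ℂ) (hx : x ≠ 0) : (pencil a c B).eval x =
      x ^ Fintype.card ι * Matrix.det (Matrix.diagonal (fun n => a n * x + c n / x) + B) := by
  rw [pencil_eval, ← Matrix.det_smul]
  congr 1
  ext n m
  by_cases h : n = m
  · subst h; simp; field_simp
  · simp [h]

open Polynomial in
lemma pencil_entry_natDegree {ι : Type} [DecidableEq ι] (a c : ι → ℂ)
    (B : Matrix ι ι ℂ) (n m : ι) :
    ((if n = m then C (a n) * X ^ 2 + C (c n) else 0) + C (B n m) * X : ℂ[X]).natDegree ≤ 2 := by
  split_ifs <;> compute_degree!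

open Polynomial in
lemma pencil_natDegree {ι : Type} [Fintype ι] [DecidableEq ι] (a c : ι → ℂ) (B : Matrix ι ι ℂ) :
    (pencil a c B).natDegree ≤ 2 * Fintype.card ι := by
  rw [pencil, Matrix.det_apply]
  refine natDegree_sum_le_of_forall_le _ _ fun σ _ => ?_
  refine (natDegree_smul_le _ _).trans ?_
  refine (natDegree_prod_le _ _).trans ?_
  refine (Finset.sum_le_card_nsmul _ _ 2 fun i _ => ?_).trans ?_
  · exact pencil_entry_natDegree a c B _ _
  · simp [mul_comm]

open Polynomial in
lemma pencil_coeff_top {ι : Type} [Fintype ι] [DecidableEq ι] (a c : ι → ℂ) (B : Matrix ι ι ℂ) :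
    (pencil a c B).coeff (2 * Fintype.card ι) = ∏ n, a n := by
  rw [pencil, Matrix.det_apply, finsetSum_coeff, ← Matrix.det_diagonal, Matrix.det_apply]
  refine Finset.sum_congr rfl fun σ _ => ?_
  rw [coeff_smul]
  congr 1
  have := coeff_prod_of_natDegree_le (Finset.univ : Finset ι)
    (fun i => (Matrix.of (fun n m : ι =>
    ((if n = m then C (a n) * X ^ 2 + C (c n) else 0) + C (B n m) * X : ℂ[X])) (σ i) i)) 2
    (fun i _ => by rw [Matrix.of_apply]; exact pencil_entry_natDegree a c B (σ i) i)
  rw [Finset.card_univ, mul_comm] at this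
  rw [this]
  refine Finset.prod_congr rfl fun i _ => ?_
  by_cases h : σ i = i
  · simp [h]
  · simp [h]

open Polynomial in
/-- A polynomial small at a point has a root near that point. -/
lemma exists_root_near (p : ℂ[X]) (N : ℕ) (hdeg : p.natDegree ≤ N) (a : ℂ)
    (ha : a ≠ 0) (hc : p.coeff N = a) (x : ℂ) (r : ℝ) (hr : 0 < r)
    (h : ‖p.eval x‖ < ‖a‖ * r ^ N) : ∃ y, p.eval y = 0 ∧ ‖y - x‖ < r := by
  have hnd : p.natDegree = N := by
    refine le_antisymm hdeg (le_natDegree_of_ne_zero (by rw [hc]; exact ha))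
  have hp0 : p ≠ 0 := by rintro rfl; simp at hc; exact ha hc.symm
  have hl : p.leadingCoeff = a := by rw [leadingCoeff, hnd, hc]
  have hs : p.Splits := IsAlgClosed.splits p
  by_contra! hcon
  have hcard : p.roots.card = N := by rw [← hnd]; exact hs.natDegree_eq_card_roots.symm
  have hev : p.eval x = a * (p.roots.map fun y => x - y).prod := by
    conv_lhs => rw [hs.eq_prod_roots]
    rw [eval_mul, eval_C, hl, eval_multiset_prod, Multiset.map_map]
    simp
  have hge : ∀ s : Multiset ℂ, (∀ y ∈ s, r ≤ ‖y - x‖) →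
      r ^ s.card ≤ ‖(s.map fun y => x - y).prod‖ := by
    intro s
    induction s using Multiset.induction_on with
    | empty => simp
    | cons y s ih =>
      intro hy
      have h1 := ih fun z hz => hy z (Multiset.mem_cons_of_mem hz)
      have h2 := hy y (Multiset.mem_cons_self y s)
      rw [Multiset.card_cons, Multiset.map_cons, Multiset.prod_cons, norm_mul, pow_succ', norm_sub_rev]
      gcongr
  have := hge p.roots fun y hy => hcon y ((mem_roots hp0).1 hy)
  rw [hcard] at this
  rw [hev, norm_mul] at h
  have := mul_le_mul_of_nonneg_left this (norm_nonneg a)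
  linarith

open Filter Topology in
lemma exists_many_roots {ι T : Type} [Fintype ι] [DecidableEq ι] (l : Filter T) (s : T → ℂ)
    (hs : Tendsto s l (𝓝 0)) (α e : ι → ℂ) (hα : ∀ n, α n ≠ 0) (he : ∀ n, e n ≠ 0)
    (hinj : ∀ n m, n ≠ m → e n * α m ≠ e m * α n)
    (E : T → ι → ℂ) (hE : Tendsto E l (𝓝 e)) (B : Matrix ι ι ℂ) :
    ∃ r R : ℝ, 0 < r ∧ ∀ᶠ t in l, ∃ y : ι → ℂ, Function.Injective y ∧
      ∀ n, r < ‖y n‖ ∧ ‖y n‖ < R ∧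
        Matrix.det (Matrix.diagonal (fun m => α m * y n + s t ^ 2 / (α m * y n) + E t m)
          + s t • B) = 0 := by
  set x : ι → ℂ := fun n => - e n / α n with hx
  have hx0 : ∀ n, x n ≠ 0 := fun n => div_ne_zero (neg_ne_zero.2 (he n)) (hα n)
  have hxinj : ∀ n m, n ≠ m → x n ≠ x m := by
    intro n m hnm h
    rw [hx] at h
    simp only at h
    rw [div_eq_div_iff (hα n) (hα m)] at h
    apply hinj n m hnm
    linear_combination -h
  -- separation
  have hfin : ∀ᶠ δ : ℝ in 𝓝[>] 0, (∀ n, 2 * δ < ‖x n‖) ∧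
      ∀ n m, n ≠ m → 2 * δ < ‖x n - x m‖ := by
    have key : ∀ c : ℝ, 0 < c → ∀ᶠ δ : ℝ in 𝓝[>] 0, 2 * δ < c := by
      intro c hc
      have : Tendsto (fun δ : ℝ => 2 * δ) (𝓝[>] 0) (𝓝 (2 * 0)) :=
        (tendsto_id.mono_left nhdsWithin_le_nhds).const_mul 2
      rw [mul_zero] at this
      exact this.eventually_lt_const hc
    refine Filter.Eventually.and ?_ ?_
    · rw [eventually_all]
      exact fun n => key _ (norm_pos_iff.2 (hx0 n))
    · rw [eventually_all]; intro n
      rw [eventually_all]; intro m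
      by_cases h : n = m
      · simp [h]
      · filter_upwards [key _ (norm_pos_iff.2 (sub_ne_zero.2 (hxinj n m h)))] with δ hδ _
        exact hδ
  obtain ⟨δ, ⟨hδ1, hδ2⟩, hδ0⟩ := (hfin.and self_mem_nhdsWithin).exists
  have hδ0 : 0 < δ := hδ0
  set p : T → Polynomial ℂ := fun t =>
    pencil α (fun m => s t ^ 2 / α m) (Matrix.diagonal (E t) + s t • B) with hp
  have hev : ∀ t y, y ≠ 0 → (p t).eval y = y ^ Fintype.card ι *
      Matrix.det (Matrix.diagonal (fun m => α m * y + s t ^ 2 / (α m * y) + E t m)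
          + s t • B) := by
    intro t y hy
    rw [hp]
    simp only
    rw [pencil_eval_ne _ _ _ _ hy]
    congr 2
    rw [← add_assoc, Matrix.diagonal_add]
    simp only [div_div]
  have hlim : ∀ n, Tendsto (fun t => (p t).eval (x n)) l (𝓝 0) := by
    intro n
    have h1 : Matrix.det (Matrix.diagonal (fun m => α m * x n ^ 2 + (0:ℂ) ^ 2 / α m) +
        x n • (Matrix.diagonal e + (0:ℂ) • B)) = 0 := by
      have : Matrix.diagonal (fun m => α m * x n ^ 2 + (0:ℂ) ^ 2 / α m) +
        x n • (Matrix.diagonal e + (0:ℂ) • B) =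
          Matrix.diagonal (fun m => α m * x n ^ 2 + x n * e m) := by
        ext i j
        by_cases h : i = j
        · subst h; simp
        · simp [h]
      rw [this, Matrix.det_diagonal]
      refine Finset.prod_eq_zero (Finset.mem_univ n) ?_
      have := hα n
      rw [hx]; field_simp; ring
    have hcont : Continuous (fun w : ℂ × (ι → ℂ) => Matrix.det
        (Matrix.diagonal (fun m => α m * x n ^ 2 + w.1 ^ 2 / α m) +
        x n • (Matrix.diagonal w.2 + w.1 • B))) := by
      refine Continuous.matrix_det ?_
      refine Continuous.add (Continuous.matrix_diagonal ?_) ?_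
      · refine continuous_pi fun m => ?_
        exact continuous_const.add ((continuous_fst.pow 2).div_const _)
      · have h3 : Continuous (fun w : ℂ × (ι → ℂ) =>
            (Matrix.diagonal w.2 + w.1 • B : Matrix ι ι ℂ)) :=
          Continuous.add (Continuous.matrix_diagonal continuous_snd)
            (Continuous.smul continuous_fst continuous_const)
        exact h3.const_smul (x n)
    have h2 := (hcont.tendsto (0, e)).comp (Tendsto.prodMk_nhds hs hE)
    simp only [h1] at h2
    refine h2.congr fun t => ?_
    simp only [hp, Function.comp, pencil_eval]
  have hprod : ∏ n, α n ≠ 0 := Finset.prod_ne_zero_iff.2 fun n _ => hα n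
  have hsmall : ∀ᶠ t in l, ∀ n, ‖(p t).eval (x n)‖ < ‖∏ n, α n‖ * δ ^ (2 * Fintype.card ι) := by
    rw [eventually_all]; intro n
    have h := (hlim n).norm
    rw [norm_zero] at h
    exact h.eventually_lt_const (by positivity)
  refine ⟨δ, ∑ n, ‖x n‖ + δ, hδ0, ?_⟩
  filter_upwards [hsmall] with t ht
  have hroot : ∀ n, ∃ y, (p t).eval y = 0 ∧ ‖y - x n‖ < δ := by
    intro n
    exact exists_root_near (p t) (2 * Fintype.card ι) (pencil_natDegree _ _ _) _ hprod
      (pencil_coeff_top _ _ _) (x n) δ hδ0 (ht n)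
  choose y hy1 hy2 using hroot
  have hylow : ∀ n, δ < ‖y n‖ := by
    intro n
    have h1 := norm_sub_norm_le (x n) (y n)
    rw [norm_sub_rev] at h1
    linarith [hδ1 n, hy2 n]
  refine ⟨y, ?_, fun n => ⟨hylow n, ?_, ?_⟩⟩
  · intro n m hnm
    by_contra hne
    have h1 := hδ2 n m hne
    have h2 : ‖x n - x m‖ ≤ ‖y n - x n‖ + ‖y m - x m‖ := by
      rw [hnm, norm_sub_rev (y m) (x n)]
      calc ‖x n - x m‖ = ‖(x n - y m) + (y m - x m)‖ := by ring_nf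
        _ ≤ _ := norm_add_le _ _
    linarith [hy2 n, hy2 m]
  · have h1 := norm_sub_norm_le (y n) (x n)
    have h2 := Finset.single_le_sum (f := fun n => ‖x n‖) (fun i _ => norm_nonneg _)
      (Finset.mem_univ n)
    linarith [hy2 n]
  · have hy0 : y n ≠ 0 := norm_pos_iff.1 (hδ0.trans (hylow n))
    have := hev t (y n) hy0
    rw [hy1 n] at this
    exact (mul_eq_zero.1 this.symm).resolve_left (pow_ne_zero _ hy0)


open Filter Topology in
lemma slice_eq {ι : Type} [Fintype ι] [DecidableEq ι]
    (α e : ι → ℂ) (hα : ∀ n, α n ≠ 0) (he : ∀ n, e n ≠ 0)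
    (h1 : ∀ n m, n ≠ m → e n * α m ≠ e m * α n)
    (h2 : ∀ n m, n ≠ m → e n * α n ≠ e m * α m)
    (E : ℕ → ι → ℂ) (hE : Tendsto (fun (t : ℕ) n => (t : ℂ)⁻¹ * E t n) atTop (𝓝 e))
    (B B' : Matrix ι ι ℂ) :
    ∀ᶠ t in atTop,
      (∀ z : ℂ, z ≠ 0 →
        Matrix.det (Matrix.diagonal (fun n => α n * z + (α n * z)⁻¹ + E t n) + B) = 0 →
        Matrix.det (Matrix.diagonal (fun n => α n * z + (α n * z)⁻¹ + E t n) + B') = 0) →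
      ∀ z : ℂ, z ≠ 0 →
        Matrix.det (Matrix.diagonal (fun n => α n * z + (α n * z)⁻¹ + E t n) + B) =
        Matrix.det (Matrix.diagonal (fun n => α n * z + (α n * z)⁻¹ + E t n) + B') := by
  have hs : Tendsto (fun t : ℕ => (t : ℂ)⁻¹) atTop (𝓝 0) :=
    tendsto_inv_atTop_nhds_zero_nat (𝕜 := ℂ)
  obtain ⟨r, R, hr, hbig⟩ := exists_many_roots atTop _ hs α e hα he h1 _ hE B
  obtain ⟨r', R', hr', hsmall⟩ := exists_many_roots atTop _ hs (fun n => (α n)⁻¹) e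
    (fun n => inv_ne_zero (hα n)) he (fun n m hnm h => h2 n m hnm (by
      have := hα n
      have := hα m
      field_simp at h
      linear_combination h)) _ hE B
  have hlarge : ∀ᶠ t : ℕ in atTop, 1 ≤ r * r' * (t : ℝ) ^ 2 := by
    have : Tendsto (fun t : ℕ => r * r' * (t : ℝ) ^ 2) atTop atTop :=
      Tendsto.const_mul_atTop (by positivity)
        ((tendsto_pow_atTop two_ne_zero).comp tendsto_natCast_atTop_atTop)
    exact this.eventually_ge_atTop 1
  filter_upwards [hbig, hsmall, hlarge, eventually_gt_atTop 0] with t ⟨y, hyi, hy⟩ ⟨y', hyi', hy'⟩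
    ht1 ht0 himp
  have ht : (t : ℂ) ≠ 0 := by exact_mod_cast ht0.ne'
  have htr : (0 : ℝ) < t := by exact_mod_cast ht0
  have hy0 : ∀ n, y n ≠ 0 := fun n => norm_pos_iff.1 (hr.trans (hy n).1)
  have hy0' : ∀ n, y' n ≠ 0 := fun n => norm_pos_iff.1 (hr'.trans (hy' n).1)
  set g : ι ⊕ ι → ℂ := Sum.elim (fun n => t * y n) (fun n => (t * y' n)⁻¹) with hg
  have hg0 : ∀ k, g k ≠ 0 := by
    rintro (n | n)
    · exact mul_ne_zero ht (hy0 n)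
    · exact inv_ne_zero (mul_ne_zero ht (hy0' n))
  have hgi : Function.Injective g := by
    have hlr : ∀ n m, (t : ℂ) * y n ≠ (t * y' m)⁻¹ := by
      intro n m h
      have h3 : (t : ℂ) * y n * (t * y' m) = 1 := by
        rw [h]; exact inv_mul_cancel₀ (mul_ne_zero ht (hy0' m))
      have h4 : (t : ℝ) * ‖y n‖ * (t * ‖y' m‖) = 1 := by
        have := congrArg norm h3
        simpa using this
      have h5 : r * r' < ‖y n‖ * ‖y' m‖ := by
        have := (hy n).1
        have := (hy' m).1
        gcongr
      have h6 : r * r' * (t : ℝ) ^ 2 < ‖y n‖ * ‖y' m‖ * (t : ℝ) ^ 2 := by gcongr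
      nlinarith
    rintro (n | n) (m | m) h
    · exact congrArg _ (hyi (mul_left_cancel₀ ht h))
    · exact absurd h (hlr n m)
    · exact absurd h.symm (hlr m n)
    · exact congrArg _ (hyi' (mul_left_cancel₀ ht (inv_injective h)))
  have hsc : ∀ (z : ℂ) (c : ι → ℂ),
      (∀ m, c m = (t : ℂ)⁻¹ * (α m * z + (α m * z)⁻¹ + E t m)) →
      Matrix.det (Matrix.diagonal c + (t : ℂ)⁻¹ • B) = 0 →
      Matrix.det (Matrix.diagonal (fun n => α n * z + (α n * z)⁻¹ + E t n) + B) = 0 := by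
    intro z c hc h
    have : Matrix.diagonal c + (t : ℂ)⁻¹ • B = (t : ℂ)⁻¹ •
        (Matrix.diagonal (fun n => α n * z + (α n * z)⁻¹ + E t n) + B) := by
      ext i j
      by_cases hij : i = j
      · subst hij; simp [hc]; ring
      · simp [hij]
    rw [this, Matrix.det_smul] at h
    exact (mul_eq_zero.1 h).resolve_left (pow_ne_zero _ (inv_ne_zero ht))
  have hgz : ∀ k, Matrix.det
      (Matrix.diagonal (fun n => α n * g k + (α n * g k)⁻¹ + E t n) + B) = 0 := by
    rintro (n | n)
    · refine hsc _ _ (fun m => ?_) (hy n).2.2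
      have := hα m
      have := hy0 n
      simp only [hg, Sum.elim_inl]
      field_simp
    · refine hsc _ _ (fun m => ?_) (hy' n).2.2
      have := hα m
      have := hy0' n
      simp only [hg, Sum.elim_inr]
      field_simp
      ring
  have hev : ∀ (B : Matrix ι ι ℂ) (z : ℂ), z ≠ 0 →
      (pencil α (fun n => (α n)⁻¹) (Matrix.diagonal (E t) + B)).eval z = z ^ Fintype.card ι *
        Matrix.det (Matrix.diagonal (fun n => α n * z + (α n * z)⁻¹ + E t n) + B) := by
    intro B z hz
    rw [pencil_eval_ne _ _ _ _ hz, ← add_assoc, Matrix.diagonal_add]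
    congr! 5 with n
    rw [mul_inv, div_eq_mul_inv]
  have hpq : pencil α (fun n => (α n)⁻¹) (Matrix.diagonal (E t) + B) =
      pencil α (fun n => (α n)⁻¹) (Matrix.diagonal (E t) + B') := by
    refine Polynomial.eq_of_degree_sub_lt_of_eval_finset_eq (Finset.univ.image g) ?_ ?_
    · rw [Finset.card_image_of_injective _ hgi, Finset.card_univ, Fintype.card_sum, ← two_mul,
        Polynomial.degree_lt_iff_coeff_zero]
      intro k hk
      rcases hk.eq_or_lt with rfl | hk
      · rw [Polynomial.coeff_sub, pencil_coeff_top, pencil_coeff_top, sub_self]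
      · rw [Polynomial.coeff_sub,
          Polynomial.coeff_eq_zero_of_natDegree_lt ((pencil_natDegree _ _ _).trans_lt hk),
          Polynomial.coeff_eq_zero_of_natDegree_lt ((pencil_natDegree _ _ _).trans_lt hk), sub_self]
    · intro x hx
      obtain ⟨k, -, rfl⟩ := Finset.mem_image.1 hx
      rw [hev _ _ (hg0 k), hev _ _ (hg0 k), hgz k, himp _ (hg0 k) (hgz k)]
  intro z hz
  have := hev B z hz
  rw [hpq, hev B' z hz] at this
  exact (mul_left_cancel₀ (pow_ne_zero _ hz) this).symm


/-- The part of the Floquet matrix independent of `z`. -/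
def floquetConst (d : ℕ) (q : Fin d → ℕ) (V : (Fin d → ℤ) → ℝ) (lam : ℂ) :
    Matrix (Cell d q) (Cell d q) ℂ :=
  Matrix.of (fun n n' => dft d q V (fun j => ((n j : ℕ) : ℤ) - ((n' j : ℕ) : ℤ))) -
    lam • (1 : Matrix (Cell d q) (Cell d q) ℂ)

lemma floquetDet_eq (d : ℕ) (q : Fin d → ℕ) (V : (Fin d → ℤ) → ℝ) (z : Fin d → ℂ) (lam : ℂ) :
    floquetDet d q V z lam = Matrix.det (Matrix.diagonal (fun n : Cell d q =>
      ∑ j, (rho d q j (n j : ℕ) * z j + (rho d q j (n j : ℕ) * z j)⁻¹)) +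
      floquetConst d q V lam) := by
  rw [floquetDet, floquetConst, ← add_sub_assoc]
  have h : floquetMatrix d q V z = Matrix.diagonal (fun n : Cell d q =>
      ∑ j, (rho d q j (n j : ℕ) * z j + (rho d q j (n j : ℕ) * z j)⁻¹)) +
      Matrix.of (fun n n' => dft d q V (fun j => ((n j : ℕ) : ℤ) - ((n' j : ℕ) : ℤ))) := by
    ext n m
    simp [floquetMatrix, Matrix.diagonal_apply]
  rw [h]

lemma rho_ne_zero (d : ℕ) (q : Fin d → ℕ) (j : Fin d) (m : ℤ) : rho d q j m ≠ 0 :=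
  Complex.exp_ne_zero _

lemma rho_eq_pow (d : ℕ) (q : Fin d → ℕ) (j : Fin d) (m : ℕ) :
    rho d q j (m : ℤ) = Complex.exp (2 * Real.pi * Complex.I / (q j : ℂ)) ^ m := by
  rw [rho, ← Complex.exp_nat_mul]
  congr 1
  push_cast
  ring

lemma rho_pow (d : ℕ) (q : Fin d → ℕ) (hq : ∀ j, 0 < q j) (j : Fin d) (m : ℕ) :
    rho d q j (m : ℤ) ^ (q j) = 1 := by
  rw [rho_eq_pow, ← pow_mul, mul_comm m, pow_mul,
    (Complex.isPrimitiveRoot_exp (q j) (hq j).ne').pow_eq_one, one_pow]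

lemma rho_inj (d : ℕ) (q : Fin d → ℕ) (hq : ∀ j, 0 < q j) (j : Fin d) (m n : Fin (q j))
    (h : rho d q j ((m : ℕ) : ℤ) = rho d q j ((n : ℕ) : ℤ)) : m = n := by
  rw [rho_eq_pow, rho_eq_pow] at h
  exact Fin.ext ((Complex.isPrimitiveRoot_exp (q j) (hq j).ne').pow_inj m.2 n.2 h)

lemma eq_one_of_coprime_pow (a : ℂ) (p r : ℕ) (h : Nat.Coprime p r) (h1 : a ^ p = 1)
    (h2 : a ^ r = 1) : a = 1 := by
  have : orderOf a ∣ Nat.gcd p r :=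
    Nat.dvd_gcd (orderOf_dvd_of_pow_eq_one h1) (orderOf_dvd_of_pow_eq_one h2)
  rw [h] at this
  exact orderOf_eq_one_iff.1 (Nat.dvd_one.1 this)

open Polynomial in
lemma exists_direction {d : ℕ} (i0 : Fin d) {κ : Type} [Fintype κ] (u : κ → Fin d → ℂ) :
    ∃ c : Fin d → ℂ, c i0 = 0 ∧ ∀ k, (∃ j, j ≠ i0 ∧ u k j ≠ 0) → ∑ j, u k j * c j ≠ 0 := by
  classical
  set L : κ → ℂ[X] := fun k => ∑ j ∈ Finset.univ.erase i0, C (u k j) * X ^ (j : ℕ) with hL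
  have hL0 : ∀ k, (∃ j, j ≠ i0 ∧ u k j ≠ 0) → L k ≠ 0 := by
    rintro k ⟨j, hj, hu⟩ h
    apply hu
    have := congrArg (fun p => coeff p (j : ℕ)) h
    simp only [hL, finsetSum_coeff, coeff_C_mul, coeff_X_pow, coeff_zero] at this
    rw [Finset.sum_eq_single j] at this
    · simpa using this
    · intro b _ hb
      have : ¬ ((j : ℕ) = (b : ℕ)) := fun h => hb (Fin.ext h.symm)
      simp [this]
    · intro h; simp [hj] at h
  set G : ℂ[X] := ∏ k ∈ Finset.univ.filter (fun k => ∃ j, j ≠ i0 ∧ u k j ≠ 0), L k with hG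
  have hG0 : G ≠ 0 := Finset.prod_ne_zero_iff.2 fun k hk => hL0 k (Finset.mem_filter.1 hk).2
  obtain ⟨K, hK⟩ : ∃ K, G.eval K ≠ 0 := by
    by_contra! h
    exact hG0 (Polynomial.funext fun x => by simp [h x])
  refine ⟨fun j => if j = i0 then 0 else K ^ (j : ℕ), by simp, fun k hk hz => hK ?_⟩
  rw [hG, eval_prod]
  refine Finset.prod_eq_zero (Finset.mem_filter.2 ⟨Finset.mem_univ k, hk⟩) ?_
  rw [← hz, ← Finset.add_sum_erase _ _ (Finset.mem_univ i0), hL, eval_finsetSum]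
  simp only [if_true, mul_zero, zero_add]
  refine Finset.sum_congr rfl fun j hj => ?_
  simp [(Finset.mem_erase.1 hj).1]

lemma exists_good_direction (d : ℕ) (q : Fin d → ℕ) (hq : ∀ j, 0 < q j)
    (hco : ∀ i j : Fin d, i ≠ j → Nat.Coprime (q i) (q j)) (i0 i1 : Fin d) (h01 : i1 ≠ i0) :
    ∃ c : Fin d → ℂ, c i0 = 0 ∧
      (∀ n : Cell d q, ∑ j, rho d q j (n j : ℕ) * c j ≠ 0) ∧
      (∀ n m : Cell d q, n ≠ m → (∑ j, rho d q j (n j : ℕ) * c j) * rho d q i0 (m i0 : ℕ) ≠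
        (∑ j, rho d q j (m j : ℕ) * c j) * rho d q i0 (n i0 : ℕ)) ∧
      (∀ n m : Cell d q, n ≠ m → (∑ j, rho d q j (n j : ℕ) * c j) * rho d q i0 (n i0 : ℕ) ≠
        (∑ j, rho d q j (m j : ℕ) * c j) * rho d q i0 (m i0 : ℕ)) := by
  -- the arithmetic heart: coprimality forces all ratios to be one
  have key : ∀ (n m : Cell d q) (a b : ℂ), a ^ q i0 = 1 → b ^ q i0 = 1 →
      (a = b → n i0 = m i0) → n ≠ m →
      ∃ j, j ≠ i0 ∧ rho d q j (n j : ℕ) * a - rho d q j (m j : ℕ) * b ≠ 0 := by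
    intro n m a b ha hb hab hnm
    by_contra! hcon
    have ha0 : a ≠ 0 := by rintro rfl; simp [(hq i0).ne'] at ha
    have h1 : ∀ j, j ≠ i0 → a = b ∧ n j = m j := by
      intro j hj
      have h2 := sub_eq_zero.1 (hcon j hj)
      have hm := rho_ne_zero d q j (m j : ℕ)
      have h3 : b / a = 1 := by
        refine eq_one_of_coprime_pow _ _ _ (hco j i0 hj) ?_ ?_
        · have : b / a = rho d q j (n j : ℕ) / rho d q j (m j : ℕ) := by
            field_simp; linear_combination -h2
          rw [this, div_pow, rho_pow d q hq, rho_pow d q hq, div_one]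
        · rw [div_pow, ha, hb, div_one]
      have h4 : a = b := ((div_eq_one_iff_eq ha0).1 h3).symm
      refine ⟨h4, rho_inj d q hq j _ _ ?_⟩
      rw [← h4] at h2
      exact mul_right_cancel₀ ha0 h2
    apply hnm
    funext j
    by_cases hj : j = i0
    · subst hj; exact hab (h1 i1 h01).1
    · exact (h1 j hj).2
  obtain ⟨c, hc0, hc⟩ := exists_direction i0
    (κ := Cell d q ⊕ ((Cell d q × Cell d q) ⊕ (Cell d q × Cell d q)))
    (Sum.elim (fun n j => rho d q j (n j : ℕ)) (Sum.elim
      (fun k j => rho d q j (k.1 j : ℕ) * rho d q i0 (k.2 i0 : ℕ) -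
        rho d q j (k.2 j : ℕ) * rho d q i0 (k.1 i0 : ℕ))
      (fun k j => rho d q j (k.1 j : ℕ) * rho d q i0 (k.1 i0 : ℕ) -
        rho d q j (k.2 j : ℕ) * rho d q i0 (k.2 i0 : ℕ))))
  refine ⟨c, hc0, fun n => ?_, fun n m hnm => ?_, fun n m hnm => ?_⟩
  · exact hc (Sum.inl n) ⟨i1, h01, rho_ne_zero _ _ _ _⟩
  · have := hc (Sum.inr (Sum.inl (n, m))) (key n m _ _ (rho_pow d q hq _ _) (rho_pow d q hq _ _)
      (fun h => (rho_inj d q hq _ _ _ h).symm) hnm)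
    intro h
    apply this
    rw [Finset.sum_mul, Finset.sum_mul, ← sub_eq_zero, ← Finset.sum_sub_distrib] at h
    rw [← h]
    refine Finset.sum_congr rfl fun j _ => ?_
    simp only [Sum.elim_inr, Sum.elim_inl]
    ring
  · have := hc (Sum.inr (Sum.inr (n, m))) (key n m _ _ (rho_pow d q hq _ _) (rho_pow d q hq _ _)
      (fun h => (rho_inj d q hq _ _ _ h)) hnm)
    intro h
    apply this
    rw [Finset.sum_mul, Finset.sum_mul, ← sub_eq_zero, ← Finset.sum_sub_distrib] at h
    rw [← h]
    refine Finset.sum_congr rfl fun j _ => ?_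
    simp only [Sum.elim_inr]
    ring

open Polynomial Filter in
lemma curve_eq {ι : Type} [Fintype ι] [DecidableEq ι] {d : ℕ} (ρ : ι → Fin d → ℂ)
    (z c : Fin d → ℂ) (hz : ∀ j, z j ≠ 0)
    (B B' : Matrix ι ι ℂ)
    (h : ∀ᶠ t : ℕ in atTop, (∀ j, z j + t * c j ≠ 0) →
      Matrix.det (Matrix.diagonal (fun n =>
        ∑ j, (ρ n j * (z j + t * c j) + (ρ n j * (z j + t * c j))⁻¹)) + B) =
      Matrix.det (Matrix.diagonal (fun n =>
        ∑ j, (ρ n j * (z j + t * c j) + (ρ n j * (z j + t * c j))⁻¹)) + B')) :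
    Matrix.det (Matrix.diagonal (fun n => ∑ j, (ρ n j * z j + (ρ n j * z j)⁻¹)) + B) =
    Matrix.det (Matrix.diagonal (fun n => ∑ j, (ρ n j * z j + (ρ n j * z j)⁻¹)) + B') := by
  set w : Fin d → ℂ[X] := fun j => C (z j) + X * C (c j) with hw
  set H : ℂ[X] := ∏ j, w j with hH
  set R : Matrix ι ι ℂ → ℂ[X] := fun B => Matrix.det (Matrix.of fun n m : ι =>
    ((if n = m then ∑ j, (C (ρ n j) * w j * H + C ((ρ n j)⁻¹) * ∏ i ∈ Finset.univ.erase j, w i)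
      else 0) + C (B n m) * H : ℂ[X])) with hR
  have hwe : ∀ τ j, (w j).eval τ = z j + τ * c j := by intro τ j; simp [hw]; ring
  have hHe : ∀ τ, H.eval τ = ∏ j, (z j + τ * c j) := by
    intro τ; rw [hH, eval_prod]; simp only [hwe]
  have hev : ∀ (B : Matrix ι ι ℂ) (τ : ℂ), (∀ j, z j + τ * c j ≠ 0) →
      (R B).eval τ = (H.eval τ) ^ Fintype.card ι * Matrix.det (Matrix.diagonal (fun n =>
        ∑ j, (ρ n j * (z j + τ * c j) + (ρ n j * (z j + τ * c j))⁻¹)) + B) := by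
    intro B τ hτ
    rw [hR, ← Matrix.det_smul]
    simp only
    rw [← Polynomial.coe_evalRingHom, RingHom.map_det]
    congr 1
    ext n m
    have hsum : (∑ j, (C (ρ n j) * w j * H + C ((ρ n j)⁻¹) * ∏ i ∈ Finset.univ.erase j, w i)).eval τ
        = H.eval τ * ∑ j, (ρ n j * (z j + τ * c j) + (ρ n j * (z j + τ * c j))⁻¹) := by
      rw [eval_finsetSum, Finset.mul_sum]
      refine Finset.sum_congr rfl fun j _ => ?_
      have h1 : H.eval τ = (z j + τ * c j) * (∏ i ∈ Finset.univ.erase j, w i).eval τ := by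
        rw [hH, ← Finset.mul_prod_erase _ _ (Finset.mem_univ j), eval_mul, hwe]
      rw [eval_add, eval_mul, eval_mul, eval_mul, eval_C, eval_C, hwe, mul_add (eval τ H), mul_inv]
      congr 1
      · ring
      · rw [h1]
        have := hτ j
        field_simp
    by_cases hnm : n = m
    · subst hnm
      simp only [RingHom.mapMatrix_apply, Matrix.map_apply, Matrix.of_apply, if_true,
        coe_evalRingHom, eval_add, hsum, Matrix.smul_apply, Matrix.add_apply,
        Matrix.diagonal_apply_eq, eval_mul, eval_C, smul_eq_mul]
      ring
    · simp [hnm, mul_comm]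
  have hzero : (R B - R B') * H = 0 := by
    obtain ⟨T, hT⟩ := eventually_atTop.1 h
    refine Polynomial.eq_zero_of_infinite_isRoot _ ?_
    have hinf : (Set.image (fun t : ℕ => (t : ℂ)) (Set.Ici T)).Infinite :=
      (Set.Ici_infinite T).image (Nat.cast_injective.injOn)
    refine hinf.mono ?_
    rintro _ ⟨t, ht, rfl⟩
    change eval _ _ = 0
    rw [eval_mul, eval_sub]
    by_cases hall : ∀ j, z j + (t : ℂ) * c j ≠ 0
    · rw [hev _ _ hall, hev _ _ hall, hT t ht hall, sub_self, zero_mul]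
    · push Not at hall
      obtain ⟨j, hj⟩ := hall
      have : H.eval (t : ℂ) = 0 := by
        rw [hHe]; exact Finset.prod_eq_zero (Finset.mem_univ j) hj
      rw [this, mul_zero]
  have hz0 : ∀ j, z j + 0 * c j ≠ 0 := by simpa using hz
  have hH0 : H.eval 0 ≠ 0 := by
    rw [hHe]; exact Finset.prod_ne_zero_iff.2 fun j _ => hz0 j
  have h0 := congrArg (eval 0) hzero
  rw [eval_mul, eval_sub, eval_zero] at h0
  have h1 := sub_eq_zero.1 ((mul_eq_zero.1 h0).resolve_right hH0)
  rw [hev _ _ hz0, hev _ _ hz0] at h1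
  have h2 := mul_left_cancel₀ (pow_ne_zero _ hH0) h1
  simpa using h2

open Filter Topology in
lemma tendsto_term (ρ z c : ℂ) :
    Tendsto (fun t : ℕ => (t : ℂ)⁻¹ * (ρ * (z + t * c) + (ρ * (z + t * c))⁻¹)) atTop
      (𝓝 (ρ * c)) := by
  have hs : Tendsto (fun t : ℕ => (t : ℂ)⁻¹) atTop (𝓝 0) :=
    tendsto_inv_atTop_nhds_zero_nat (𝕜 := ℂ)
  have hb : ∃ b, Tendsto (fun t : ℕ => (z + t * c)⁻¹) atTop (𝓝 b) := by
    by_cases hc : c = 0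
    · exact ⟨z⁻¹, by simp [hc]⟩
    · refine ⟨0 * (0 * z + c)⁻¹, ?_⟩
      have h1 : Tendsto (fun t : ℕ => (t : ℂ)⁻¹ * ((t : ℂ)⁻¹ * z + c)⁻¹) atTop
          (𝓝 (0 * (0 * z + c)⁻¹)) :=
        hs.mul (((hs.mul_const z).add_const c).inv₀ (by simpa using hc))
      refine h1.congr' ?_
      filter_upwards [eventually_gt_atTop 0] with t ht
      have ht : (t : ℂ) ≠ 0 := by exact_mod_cast ht.ne'
      rw [← mul_inv]
      congr 1
      field_simp
  obtain ⟨b, hb⟩ := hb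
  have h2 : Tendsto (fun t : ℕ => ρ * ((t : ℂ)⁻¹ * z + c) + (t : ℂ)⁻¹ * (ρ⁻¹ * (z + t * c)⁻¹))
      atTop (𝓝 (ρ * (0 * z + c) + 0 * (ρ⁻¹ * b))) :=
    (((hs.mul_const z).add_const c).const_mul ρ).add (hs.mul (hb.const_mul _))
  have h3 : ρ * (0 * z + c) + 0 * (ρ⁻¹ * b) = ρ * c := by ring
  rw [h3] at h2
  refine h2.congr' ?_
  filter_upwards [eventually_gt_atTop 0] with t ht
  have ht : (t : ℂ) ≠ 0 := by exact_mod_cast ht.ne'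
  rw [mul_inv]
  field_simp

open Filter Topology in
lemma main_ge_two (d : ℕ) (q : Fin d → ℕ) (hq : ∀ j, 0 < q j)
    (hco : ∀ i j : Fin d, i ≠ j → Nat.Coprime (q i) (q j)) (i0 i1 : Fin d) (h01 : i1 ≠ i0)
    (V Y : (Fin d → ℤ) → ℝ) (lam0 : ℂ)
    (hzeros : ∀ z : Fin d → ℂ, (∀ j, z j ≠ 0) → floquetDet d q V z lam0 = 0 →
      floquetDet d q Y z lam0 = 0) (z : Fin d → ℂ) (hz : ∀ j, z j ≠ 0) :
    floquetDet d q V z lam0 = floquetDet d q Y z lam0 := by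
  obtain ⟨c, hc0, hc1, hc2, hc3⟩ := exists_good_direction d q hq hco i0 i1 h01
  rw [floquetDet_eq, floquetDet_eq]
  refine curve_eq (fun (n : Cell d q) j => rho d q j (n j : ℕ)) z c hz _ _ ?_
  have hlim : Tendsto (fun (t : ℕ) (n : Cell d q) => (t : ℂ)⁻¹ * ∑ j ∈ Finset.univ.erase i0,
      (rho d q j (n j : ℕ) * (z j + t * c j) + (rho d q j (n j : ℕ) * (z j + t * c j))⁻¹)) atTop
      (𝓝 fun n => ∑ j, rho d q j (n j : ℕ) * c j) := by
    rw [tendsto_pi_nhds]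
    intro n
    rw [← Finset.add_sum_erase _ _ (Finset.mem_univ i0), hc0, mul_zero, zero_add]
    simp only [Finset.mul_sum]
    exact tendsto_finsetSum _ fun j _ => tendsto_term _ _ _
  have := slice_eq (fun n : Cell d q => rho d q i0 (n i0 : ℕ)) _ (fun n => rho_ne_zero _ _ _ _)
    hc1 hc2 hc3 _ hlim (floquetConst d q V lam0) (floquetConst d q Y lam0)
  filter_upwards [this] with t ht hne
  have hsplit : ∀ x : ℂ, (fun n : Cell d q => ∑ j,
      (rho d q j (n j : ℕ) * (Function.update (fun j => z j + t * c j) i0 x j) +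
      (rho d q j (n j : ℕ) * (Function.update (fun j => z j + t * c j) i0 x j))⁻¹)) =
      fun n => rho d q i0 (n i0 : ℕ) * x + (rho d q i0 (n i0 : ℕ) * x)⁻¹ +
        ∑ j ∈ Finset.univ.erase i0,
      (rho d q j (n j : ℕ) * (z j + t * c j) + (rho d q j (n j : ℕ) * (z j + t * c j))⁻¹) := by
    intro x
    funext n
    rw [← Finset.add_sum_erase _ _ (Finset.mem_univ i0), Function.update_self]
    congr 1
    refine Finset.sum_congr rfl fun j hj => ?_
    rw [Function.update_of_ne (Finset.mem_erase.1 hj).1]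
  have hfin := ht ?_ (z i0) (hz i0)
  · rw [← hsplit] at hfin
    have hup : Function.update (fun j => z j + t * c j) i0 (z i0) = fun j => z j + t * c j := by
      rw [Function.update_eq_self_iff]; simp [hc0]
    rw [hup] at hfin
    exact hfin
  · intro x hx h
    rw [← hsplit, ← floquetDet_eq] at h ⊢
    refine hzeros _ (fun j => ?_) h
    by_cases hj : j = i0
    · subst hj; simpa using hx
    · rw [Function.update_of_ne hj]; exact hne j


lemma dft_periodic (d : ℕ) (q : Fin d → ℕ) (hq : ∀ j, 0 < q j) (V : (Fin d → ℤ) → ℝ)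
    (l k : Fin d → ℤ) : dft d q V (fun j => l j + q j * k j) = dft d q V l := by
  unfold dft
  congr 1
  refine Finset.sum_congr rfl fun n _ => ?_
  congr 1
  rw [Complex.exp_eq_exp_iff_exists_int]
  refine ⟨-∑ j, k j * ((n j : ℕ) : ℤ), ?_⟩
  have : ∑ j, (((l j + q j * k j : ℤ)) : ℂ) * ((n j : ℕ) : ℂ) / (q j : ℂ) =
      ∑ j, (l j : ℂ) * ((n j : ℕ) : ℂ) / (q j : ℂ) + ∑ j, (k j : ℂ) * ((n j : ℕ) : ℂ) := by
    rw [← Finset.sum_add_distrib]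
    refine Finset.sum_congr rfl fun j _ => ?_
    have : (q j : ℂ) ≠ 0 := by exact_mod_cast (hq j).ne'
    push_cast
    field_simp
  rw [this]
  push_cast
  ring

/-- The cyclic shift of a cell. -/
def cellShift (d : ℕ) (q : Fin d → ℕ) : Equiv.Perm (Cell d q) :=
  Equiv.piCongrRight fun j => finRotate (q j)

lemma cellShift_val (d : ℕ) (q : Fin d → ℕ) (n : Cell d q) (j : Fin d) :
    ∃ k : ℤ, ((cellShift d q n j : ℕ) : ℤ) = (n j : ℕ) + 1 + q j * k := by
  have key : ∀ (N : ℕ) (a : Fin N), ∃ k : ℤ, ((finRotate N a : ℕ) : ℤ) = (a : ℕ) + 1 + N * k := by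
    intro N a
    cases N with
    | zero => exact a.elim0
    | succ N =>
      by_cases h : a = Fin.last N
      · exact ⟨-1, by subst h; simp⟩
      · exact ⟨0, by rw [coe_finRotate_of_ne_last h]; simp⟩
  exact key _ _

lemma rho_shift (d : ℕ) (q : Fin d → ℕ) (hq : ∀ j, 0 < q j) (j : Fin d) (m k : ℤ) :
    rho d q j (m + 1 + q j * k) = rho d q j m * rho d q j 1 := by
  unfold rho
  rw [← Complex.exp_add, Complex.exp_eq_exp_iff_exists_int]
  refine ⟨k, ?_⟩
  have : (q j : ℂ) ≠ 0 := by exact_mod_cast (hq j).ne'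
  push_cast
  field_simp

lemma floquetDet_shift (d : ℕ) (q : Fin d → ℕ) (hq : ∀ j, 0 < q j) (V : (Fin d → ℤ) → ℝ)
    (z : Fin d → ℂ) (lam : ℂ) :
    floquetDet d q V (fun j => rho d q j 1 * z j) lam = floquetDet d q V z lam := by
  unfold floquetDet
  rw [← Matrix.det_submatrix_equiv_self (cellShift d q) (floquetMatrix d q V z - lam • 1)]
  congr 1
  ext n m
  choose k hk using cellShift_val d q
  simp only [Matrix.submatrix_apply, Matrix.sub_apply, Matrix.smul_apply, Matrix.one_apply,
    (cellShift d q).injective.eq_iff, floquetMatrix, hk, rho_shift d q hq]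
  congr 2
  · simp only [mul_assoc]
  · rw [← dft_periodic d q hq V _ (fun j => k n j - k m j)]
    congr 1
    funext j
    ring

open Polynomial in
lemma main_one (q : Fin 1 → ℕ) (hq : ∀ j, 0 < q j)
    (V Y : (Fin 1 → ℤ) → ℝ) (lam0 : ℂ)
    (hzeros : ∀ z : Fin 1 → ℂ, (∀ j, z j ≠ 0) → floquetDet 1 q V z lam0 = 0 →
      floquetDet 1 q Y z lam0 = 0) (z : Fin 1 → ℂ) (hz : ∀ j, z j ≠ 0) :
    floquetDet 1 q V z lam0 = floquetDet 1 q Y z lam0 := by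
  set N := q 0 with hN
  have hN0 : 0 < N := hq 0
  have hcard : Fintype.card (Cell 1 q) = N := by simp [Cell, hN]
  set α : Cell 1 q → ℂ := fun n => rho 1 q 0 (n 0 : ℕ) with hα
  have hα0 : ∀ n, α n ≠ 0 := fun n => rho_ne_zero _ _ _ _
  set f : ((Fin 1 → ℤ) → ℝ) → ℂ[X] := fun V =>
    pencil α (fun n => (α n)⁻¹) (floquetConst 1 q V lam0) with hf
  have hev : ∀ V x, x ≠ 0 → (f V).eval x = x ^ N * floquetDet 1 q V (fun _ => x) lam0 := by
    intro V x hx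
    simp only [hf]
    rw [pencil_eval_ne _ _ _ _ hx, hcard, floquetDet_eq]
    congr! 5 with n
    simp [hα, div_eq_mul_inv, mul_comm]
  set ω := rho 1 q 0 1 with hω
  have hω0 : ω ≠ 0 := rho_ne_zero _ _ _ _
  have hprim : IsPrimitiveRoot ω N := by
    have := rho_eq_pow 1 q 0 1
    rw [pow_one, Nat.cast_one] at this
    rw [hω, this]
    exact Complex.isPrimitiveRoot_exp _ hN0.ne'
  have hsym : ∀ V, (f V).comp (C ω * X) = f V := by
    intro V
    refine Polynomial.eq_of_infinite_eval_eq _ _ ?_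
    refine Set.Infinite.mono (s := {(0:ℂ)}ᶜ) ?_ (Set.finite_singleton _).infinite_compl
    intro x hx
    have hx : x ≠ 0 := hx
    change eval x _ = eval x _
    rw [eval_comp, eval_mul, eval_C, eval_X, hev _ _ (mul_ne_zero hω0 hx), hev _ _ hx, mul_pow,
      hprim.pow_eq_one, one_mul]
    congr 1
    rw [← floquetDet_shift 1 q hq V (fun _ => x)]
    congr 1
    funext j
    rw [Subsingleton.elim j 0]
  have hcoef : ∀ V k, ¬ N ∣ k → (f V).coeff k = 0 := by
    intro V k hk
    have h := congrArg (fun p => coeff p k) (hsym V)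
    simp only [comp_C_mul_X_coeff] at h
    have h1 : ω ^ k ≠ 1 := fun h => hk ((hprim.pow_eq_one_iff_dvd k).1 h)
    have h2 : (f V).coeff k * (ω ^ k - 1) = 0 := by linear_combination h
    exact (mul_eq_zero.1 h2).resolve_right (sub_ne_zero.2 h1)
  have hev0 : ∀ V, (f V).eval 0 = ∏ n, (α n)⁻¹ := by
    intro V
    simp only [hf]
    rw [pencil_eval]
    simp
  have htop : ∀ V, (f V).coeff (2 * N) = ∏ n, α n := by
    intro V; rw [← hcard]; exact pencil_coeff_top _ _ _
  have hdeg : ∀ V, (f V).natDegree ≤ 2 * N := by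
    intro V; rw [← hcard]; exact pencil_natDegree _ _ _
  have hdiff : f V - f Y = C ((f V - f Y).coeff N) * X ^ N := by
    ext k
    rw [coeff_C_mul, coeff_X_pow]
    split_ifs with hk
    · rw [hk, mul_one]
    rw [mul_zero, coeff_sub]
    by_cases hdvd : N ∣ k
    · obtain ⟨a, rfl⟩ := hdvd
      rcases Nat.lt_or_ge a 3 with ha | ha
      · interval_cases a
        · rw [mul_zero, coeff_zero_eq_eval_zero, coeff_zero_eq_eval_zero, hev0, hev0, sub_self]
        · simp at hk
        · rw [mul_comm, htop, htop, sub_self]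
      · have : 2 * N < N * a := by nlinarith
        rw [coeff_eq_zero_of_natDegree_lt ((hdeg V).trans_lt this),
          coeff_eq_zero_of_natDegree_lt ((hdeg Y).trans_lt this), sub_self]
    · rw [hcoef _ _ hdvd, hcoef _ _ hdvd, sub_self]
  obtain ⟨x, hx⟩ : ∃ x, IsRoot (f V) x := by
    refine IsAlgClosed.exists_root _ ?_
    intro h
    have h1 : (f V).coeff (2 * N) = 0 := by
      refine coeff_eq_zero_of_degree_lt ?_
      rw [h]
      exact_mod_cast (by omega : 0 < 2 * N)
    rw [htop] at h1
    exact Finset.prod_ne_zero_iff.2 (fun n _ => hα0 n) h1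
  have hx : (f V).eval x = 0 := hx
  have hx0 : x ≠ 0 := by
    rintro rfl
    rw [hev0] at hx
    exact Finset.prod_ne_zero_iff.2 (fun n _ => inv_ne_zero (hα0 n)) hx
  have hxY : (f Y).eval x = 0 := by
    rw [hev _ _ hx0] at hx ⊢
    rw [hzeros _ (fun _ => hx0) ((mul_eq_zero.1 hx).resolve_left (pow_ne_zero _ hx0)), mul_zero]
  have hc : (f V - f Y).coeff N = 0 := by
    have h := congrArg (eval x) hdiff
    rw [eval_sub, hx, hxY, eval_mul, eval_C, eval_pow, eval_X, sub_self] at h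
    exact (mul_eq_zero.1 h.symm).resolve_right (pow_ne_zero _ hx0)
  rw [hc, C_0, zero_mul] at hdiff
  have hfe := sub_eq_zero.1 hdiff
  have hzc : z = fun _ => z 0 := by funext j; rw [Subsingleton.elim j 0]
  have h1 := hev V (z 0) (hz 0)
  rw [hfe, hev Y _ (hz 0)] at h1
  rw [hzc]
  exact (mul_left_cancel₀ (pow_ne_zero _ (hz 0)) h1).symm

/-- Lemma 2.6: if the zero sets of `P̃_V(·, λ₀)` and `P̃_Y(·, λ₀)` on
`(ℂ∖{0})^d` coincide, then `P̃_V(z, λ₀) = P̃_Y(z, λ₀)` for all `z ∈ (ℂ∖{0})^d`. -/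
theorem floquetDet_eq_of_zero_sets_eq
    (d : ℕ) (hd : 1 ≤ d)
    (q : Fin d → ℕ) (hq : ∀ j, 0 < q j)
    (hco : ∀ i j : Fin d, i ≠ j → Nat.Coprime (q i) (q j))
    (V Y : (Fin d → ℤ) → ℝ)
    (hVper : IsPeriodicPotential d q V) (hYper : IsPeriodicPotential d q Y)
    (lam0 : ℂ)
    (hzeros : {z : Fin d → ℂ | (∀ j, z j ≠ 0) ∧ floquetDet d q V z lam0 = 0}
      = {z : Fin d → ℂ | (∀ j, z j ≠ 0) ∧ floquetDet d q Y z lam0 = 0}) :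
    ∀ z : Fin d → ℂ, (∀ j, z j ≠ 0) →
      floquetDet d q V z lam0 = floquetDet d q Y z lam0 := by
  have hz' : ∀ z : Fin d → ℂ, (∀ j, z j ≠ 0) → floquetDet d q V z lam0 = 0 →
      floquetDet d q Y z lam0 = 0 := fun z h1 h2 => (hzeros.subset ⟨h1, h2⟩).2
  rcases hd.eq_or_lt with rfl | hd
  · exact main_one q hq V Y lam0 hz'
  · exact main_ge_two d q hq hco ⟨0, by omega⟩ ⟨1, hd⟩ (by simp) V Y lam0 hz'

end
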